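/- arXiv:2012.06995 — 6 statements merged into one kernel-verified Lean document; each statement's English description precedes it below -/
import Mathlib

section
/- For any K ≥ 1 and any p₁, p₂, p′ in the probability simplex Δ_K, the classifier determinacy disparity satisfies the triangle inequality: Γ(p₁,p₂) ≤ Γ(p₁,p′) + Γ(p′,p₂). -/
/-!
The claim reads `⟨p₁, p'⟩ + ⟨p', p₂⟩ ≤ 1 + ⟨p₁, p₂⟩`. Both sides are affine in `p'`, so it suffices
to check the vertices of the simplex, i.e. `p₁ k + p₂ k ≤ 1 + ⟨p₁, p₂⟩` for each `k`. This follows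
from `(1 - p₁ k) * (1 - p₂ k) ≥ 0` and `p₁ k * p₂ k ≤ ⟨p₁, p₂⟩`.
-/

/-- Classifier determinacy disparity Γ(p,q) = ∑_{m≠n} p_m q_n = 1 − ∑_k p_k q_k. -/
noncomputable def Gam {K : ℕ} (p q : Fin K → ℝ) : ℝ := 1 - ∑ k, p k * q k

/-- triangle inequality Γ(p₁,p₂) ≤ Γ(p₁,p′) + Γ(p′,p₂) on the simplex. -/
theorem cdd_triangle (K : ℕ) (hK : 1 ≤ K) (p₁ p₂ p' : Fin K → ℝ)
    (hp₁0 : ∀ k, 0 ≤ p₁ k) (hp₁1 : ∑ k, p₁ k = 1)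
    (hp₂0 : ∀ k, 0 ≤ p₂ k) (hp₂1 : ∑ k, p₂ k = 1)
    (hp'0 : ∀ k, 0 ≤ p' k) (hp'1 : ∑ k, p' k = 1) :
    Gam p₁ p₂ ≤ Gam p₁ p' + Gam p' p₂ := by
  -- The bound for `p'` a vertex of the simplex; the general case averages over the weights `p'`.
  have vertex : ∀ k, p₁ k + p₂ k ≤ 1 + ∑ j, p₁ j * p₂ j := by
    intro k
    have h₁ : p₁ k ≤ 1 :=
      hp₁1 ▸ Finset.single_le_sum (fun j _ => hp₁0 j) (Finset.mem_univ k)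
    have h₂ : p₂ k ≤ 1 :=
      hp₂1 ▸ Finset.single_le_sum (fun j _ => hp₂0 j) (Finset.mem_univ k)
    have h₃ : p₁ k * p₂ k ≤ ∑ j, p₁ j * p₂ j :=
      Finset.single_le_sum (f := fun j => p₁ j * p₂ j)
        (fun j _ => mul_nonneg (hp₁0 j) (hp₂0 j)) (Finset.mem_univ k)
    nlinarith [mul_nonneg (sub_nonneg.2 h₁) (sub_nonneg.2 h₂)]
  have average : ∑ k, p' k * (p₁ k + p₂ k) ≤ ∑ k, p' k * (1 + ∑ j, p₁ j * p₂ j) :=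
    Finset.sum_le_sum fun k _ => mul_le_mul_of_nonneg_left (vertex k) (hp'0 k)
  rw [← Finset.sum_mul, hp'1, one_mul] at average
  have split : ∑ k, p' k * (p₁ k + p₂ k) = ∑ k, p₁ k * p' k + ∑ k, p' k * p₂ k := by
    rw [← Finset.sum_add_distrib]
    exact Finset.sum_congr rfl fun k _ => by ring
  unfold Gam
  linarith
end

section
/- For any K ≥ 1 and any p, q in the probability simplex Δ_K, Γ(p,q) = 0 if and only if there exists an index k with p = q = e_k, where e_k is the k-th standard basis vector (the one-hot vector with 1 in coordinate k and 0 elsewhere); that is, the classifier determinacy disparity attains its minimum value of zero exactly when the two predictions are consistent and fully determined. -/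
theorem eq_single_of_coord_eq_one {K : ℕ} (v : Fin K → ℝ) (h0 : ∀ k, 0 ≤ v k)
    (h1 : ∑ k, v k = 1) (k : Fin K) (hk : v k = 1) : v = Pi.single k 1 := by
  have hs := Finset.add_sum_erase Finset.univ v (Finset.mem_univ k)
  have hz : ∑ j ∈ Finset.univ.erase k, v j = 0 := by linarith
  rw [Finset.sum_eq_zero_iff_of_nonneg (fun j _ => h0 j)] at hz
  funext j
  by_cases hj : j = k
  · subst hj
    simpa using hk
  · rw [Pi.single_eq_of_ne hj]
    exact hz j (Finset.mem_erase.mpr ⟨hj, Finset.mem_univ j⟩)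

/-- Γ(p,q) = 0 iff p = q = e_k for some standard basis (one-hot) vector e_k. -/
theorem cdd_eq_zero_iff_one_hot (K : ℕ) (hK : 1 ≤ K) (p q : Fin K → ℝ)
    (hp0 : ∀ k, 0 ≤ p k) (hp1 : ∑ k, p k = 1)
    (hq0 : ∀ k, 0 ≤ q k) (hq1 : ∑ k, q k = 1) :
    Gam p q = 0 ↔ ∃ k : Fin K, p = Pi.single k 1 ∧ q = Pi.single k 1 := by
  unfold Gam
  constructor
  · intro h
    have hq_le : ∀ k, q k ≤ 1 := fun k =>
      hq1 ▸ Finset.single_le_sum (fun j _ => hq0 j) (Finset.mem_univ k)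
    have hsum : ∑ k, p k * (1 - q k) = 0 := by
      simp only [mul_sub, mul_one, Finset.sum_sub_distrib, hp1]
      exact h
    rw [Finset.sum_eq_zero_iff_of_nonneg
      (fun k _ => mul_nonneg (hp0 k) (sub_nonneg.mpr (hq_le k)))] at hsum
    obtain ⟨k, -, hk⟩ : ∃ k ∈ Finset.univ, p k ≠ 0 :=
      Finset.exists_ne_zero_of_sum_ne_zero (by rw [hp1]; exact one_ne_zero)
    have hqk : q k = 1 := by
      rcases mul_eq_zero.mp (hsum k (Finset.mem_univ k)) with h' | h'
      · exact absurd h' hk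
      · linarith
    have hq := eq_single_of_coord_eq_one q hq0 hq1 k hqk
    refine ⟨k, eq_single_of_coord_eq_one p hp0 hp1 k ?_, hq⟩
    simp [hq, Pi.single_apply] at h
    linarith
  · rintro ⟨k, rfl, rfl⟩
    simp [Pi.single_apply]
end

section
/- For any K ≥ 1 and any p₁, p₂, p′ in the probability simplex Δ_K, the key inequality used in the proof of the triangle inequality for Γ holds: ⟨p₁, p′⟩ + ⟨p′, p₂⟩ ≤ 1 + ⟨p₁, p₂⟩, where ⟨·,·⟩ denotes the Euclidean inner product ∑_k p_k q_k. -/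
/-- key inequality ⟨p₁,p′⟩ + ⟨p′,p₂⟩ ≤ 1 + ⟨p₁,p₂⟩ on the probability simplex. -/
theorem simplex_inner_key_inequality (K : ℕ) (hK : 1 ≤ K) (p₁ p₂ p' : Fin K → ℝ)
    (hp₁0 : ∀ k, 0 ≤ p₁ k) (hp₁1 : ∑ k, p₁ k = 1)
    (hp₂0 : ∀ k, 0 ≤ p₂ k) (hp₂1 : ∑ k, p₂ k = 1)
    (hp'0 : ∀ k, 0 ≤ p' k) (hp'1 : ∑ k, p' k = 1) :
    (∑ k, p₁ k * p' k) + (∑ k, p' k * p₂ k) ≤ 1 + ∑ k, p₁ k * p₂ k := by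
  -- Both sides are affine in `p'`, so the vertices of the simplex suffice; there the bound
  -- follows from `(1 - p₁ k) * (1 - p₂ k) ≥ 0`.
  have vertex : ∀ k, p₁ k + p₂ k ≤ 1 + ∑ j, p₁ j * p₂ j := by
    intro k
    have h1 : p₁ k ≤ 1 :=
      hp₁1 ▸ Finset.single_le_sum (fun j _ => hp₁0 j) (Finset.mem_univ k)
    have h2 : p₂ k ≤ 1 :=
      hp₂1 ▸ Finset.single_le_sum (fun j _ => hp₂0 j) (Finset.mem_univ k)
    have h3 : p₁ k * p₂ k ≤ ∑ j, p₁ j * p₂ j :=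
      Finset.single_le_sum (f := fun j => p₁ j * p₂ j)
        (fun j _ => mul_nonneg (hp₁0 j) (hp₂0 j)) (Finset.mem_univ k)
    nlinarith [mul_nonneg (sub_nonneg.2 h1) (sub_nonneg.2 h2)]
  calc (∑ k, p₁ k * p' k) + (∑ k, p' k * p₂ k)
      = ∑ k, p' k * (p₁ k + p₂ k) := by
        rw [← Finset.sum_add_distrib]
        exact Finset.sum_congr rfl fun k _ => by ring
    _ ≤ ∑ k, p' k * (1 + ∑ j, p₁ j * p₂ j) :=
        Finset.sum_le_sum fun k _ => mul_le_mul_of_nonneg_left (vertex k) (hp'0 k)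
    _ = 1 + ∑ k, p₁ k * p₂ k := by rw [← Finset.sum_mul, hp'1, one_mul]
end

section
/- Let D be a probability measure on a measurable space X and let h₁, h₂, h₃ : X → Δ_K be measurable. Then the expected determinacy disparity is symmetric and satisfies the triangle inequality: dis_D(h₁,h₂) = dis_D(h₂,h₁), and dis_D(h₁,h₂) ≤ dis_D(h₁,h₃) + dis_D(h₃,h₂). -/
/-!
The triangle inequality holds pointwise. For `p, q, r` in the simplex it reads
`∑ k, r k * (p k + q k) ≤ 1 + ∑ k, p k * q k`, and since `r` is a probability vector it suffices
that each `p k + q k` is at most the right-hand side. This follows from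
`0 ≤ (1 - p k) * (1 - q k)` by dropping the nonnegative terms `p j * q j` with `j ≠ k`.
Integration then gives the claim, as `Gam` takes values in `[0, 1]` on the simplex and is
therefore integrable along measurable maps.
-/

open MeasureTheory

/-- Membership in the probability simplex Δ_K. -/
def inSimplex {K : ℕ} (p : Fin K → ℝ) : Prop := (∀ k, 0 ≤ p k) ∧ ∑ k, p k = 1

/-- Expected determinacy disparity dis_D(h₁,h₂) = ∫ Γ(h₁(x), h₂(x)) dD(x). -/
noncomputable def dis {X : Type*} [MeasurableSpace X] {K : ℕ}
    (D : Measure X) (h₁ h₂ : X → Fin K → ℝ) : ℝ :=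
  ∫ x, Gam (h₁ x) (h₂ x) ∂D

/-- Determinacy disparity discrepancy d_{h,H}(P,Q) = sup_{h'∈H} (dis_Q(h',h) − dis_P(h',h)). -/
noncomputable def ddd {X : Type*} [MeasurableSpace X] {K : ℕ}
    (H : Set (X → Fin K → ℝ)) (h : X → Fin K → ℝ) (P Q : Measure X) : ℝ :=
  sSup {r | ∃ h' ∈ H, r = dis Q h' h - dis P h' h}

theorem Gam_comm {K : ℕ} (p q : Fin K → ℝ) : Gam p q = Gam q p := by
  simp only [Gam, mul_comm]

theorem inSimplex.le_one {K : ℕ} {p : Fin K → ℝ} (hp : inSimplex p) (k : Fin K) : p k ≤ 1 :=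
  hp.2 ▸ Finset.single_le_sum (fun j _ => hp.1 j) (Finset.mem_univ k)

theorem Gam_le_one {K : ℕ} {p q : Fin K → ℝ} (hp : inSimplex p) (hq : inSimplex q) :
    Gam p q ≤ 1 :=
  sub_le_self _ (Finset.sum_nonneg fun k _ => mul_nonneg (hp.1 k) (hq.1 k))

theorem Gam_nonneg {K : ℕ} {p q : Fin K → ℝ} (hp : inSimplex p) (hq : inSimplex q) :
    0 ≤ Gam p q := by
  have h : ∑ k, p k * q k ≤ ∑ k, p k :=
    Finset.sum_le_sum fun k _ => mul_le_of_le_one_right (hp.1 k) (hq.le_one k)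
  rw [hp.2] at h
  exact sub_nonneg.2 h

theorem Gam_triangle {K : ℕ} {p q r : Fin K → ℝ} (hp : inSimplex p) (hq : inSimplex q)
    (hr : inSimplex r) : Gam p q ≤ Gam p r + Gam r q := by
  have hk : ∀ k, p k + q k ≤ 1 + ∑ j, p j * q j := fun k => by
    have h := Finset.single_le_sum (f := fun j => p j * q j)
      (fun j _ => mul_nonneg (hp.1 j) (hq.1 j)) (Finset.mem_univ k)
    nlinarith [mul_nonneg (sub_nonneg.2 (hp.le_one k)) (sub_nonneg.2 (hq.le_one k))]
  have hsum : ∑ k, r k * (p k + q k) ≤ ∑ k, r k * (1 + ∑ j, p j * q j) :=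
    Finset.sum_le_sum fun k _ => mul_le_mul_of_nonneg_left (hk k) (hr.1 k)
  rw [← Finset.sum_mul, hr.2, one_mul] at hsum
  simp only [mul_add, Finset.sum_add_distrib] at hsum
  have hc : ∑ k, r k * p k = ∑ k, p k * r k := by simp only [mul_comm]
  unfold Gam
  linarith

theorem integrable_Gam {X : Type*} [MeasurableSpace X] {K : ℕ} (D : Measure X)
    [IsProbabilityMeasure D] {f g : X → Fin K → ℝ} (hf : Measurable f) (hg : Measurable g)
    (hfs : ∀ x, inSimplex (f x)) (hgs : ∀ x, inSimplex (g x)) :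
    Integrable (fun x => Gam (f x) (g x)) D := by
  have hm : Measurable fun x => Gam (f x) (g x) := by
    unfold Gam
    fun_prop
  refine Integrable.of_bound hm.aestronglyMeasurable 1 (Filter.Eventually.of_forall fun x => ?_)
  rw [Real.norm_of_nonneg (Gam_nonneg (hfs x) (hgs x))]
  exact Gam_le_one (hfs x) (hgs x)

/-- the expected determinacy disparity is symmetric and satisfies
the triangle inequality. -/
theorem dis_symm_and_triangle {X : Type*} [MeasurableSpace X] (K : ℕ) (hK : 1 ≤ K)
    (D : Measure X) [IsProbabilityMeasure D]
    (h₁ h₂ h₃ : X → Fin K → ℝ)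
    (hm₁ : Measurable h₁) (hm₂ : Measurable h₂) (hm₃ : Measurable h₃)
    (hs₁ : ∀ x, inSimplex (h₁ x)) (hs₂ : ∀ x, inSimplex (h₂ x))
    (hs₃ : ∀ x, inSimplex (h₃ x)) :
    dis D h₁ h₂ = dis D h₂ h₁ ∧ dis D h₁ h₂ ≤ dis D h₁ h₃ + dis D h₃ h₂ := by
  refine ⟨integral_congr_ae (Filter.Eventually.of_forall fun x => Gam_comm _ _), ?_⟩
  have i₁₃ := integrable_Gam D hm₁ hm₃ hs₁ hs₃
  have i₃₂ := integrable_Gam D hm₃ hm₂ hs₃ hs₂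
  unfold dis
  rw [← integral_add i₁₃ i₃₂]
  exact integral_mono (integrable_Gam D hm₁ hm₂ hs₁ hs₂) (i₁₃.add i₃₂)
    fun x => Gam_triangle (hs₁ x) (hs₂ x) (hs₃ x)
end

section
/- Let G be a countable nonempty class of measurable functions from a measurable space X to [0,1], let D be a probability measure on X, and let n ≥ 1. Then for any δ > 0, with probability at least 1 − δ over an i.i.d. sample x = (x₁,…,x_n) drawn from D^n, the following holds simultaneously for all g ∈ G: |E_D g − (1/n) ∑_{i=1}^n g(x_i)| ≤ 2 R_{n,D}(G) + √(log(2/δ)/(2n)). -/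
/-! The theorem combines the bounded-differences (McDiarmid) inequality with symmetrization.
Enumerating the class as a sequence `u`, the one-sided deviation
`devSup D u x = sup_k (E u_k - (1/n) ∑ᵢ u_k(xᵢ))` changes by at most `1/n` when one coordinate of
`x` changes. Applying Hoeffding's lemma one coordinate at a time (`integral_exp_pi_le`) and
Chernoff's bound give `devSup ≤ E devSup + t` outside an event of probability `exp (-2 n t²)`
(`measure_pi_ge_le`).

For the mean (`integral_devSup_le`), `E u_k` is the expectation of the empirical mean over an
independent ghost sample, so `E devSup` is at most the expectation of
`sup_k (1/n) ∑ᵢ (u_k(yᵢ) - u_k(xᵢ))` over pairs of samples. Exchanging `xᵢ` with `yᵢ` preserves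
the law of the pair, so each summand may be multiplied by an arbitrary sign; splitting the
supremum and averaging over all sign patterns yields twice the Rademacher complexity.

The two-sided bound is a union bound over the classes `u` and `-u`, which have the same Rademacher
complexity since negating the class amounts to flipping all signs. With `t = √(log(2/δ)/(2n))` each
side fails with probability at most `δ/2`. -/

open MeasureTheory

/-- Rademacher complexity R_{n,D}(G) = E_{x∼D^n} E_σ [sup_{g∈G} (1/n) ∑ᵢ σᵢ g(xᵢ)],
with the expectation over i.i.d. uniform signs written as an average over all
2^n sign patterns σ : Fin n → Bool (true ↦ +1, false ↦ −1). -/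
noncomputable def rademacher {X : Type*} [MeasurableSpace X] (n : ℕ) (D : Measure X)
    (G : Set (X → ℝ)) : ℝ :=
  ∫ x : Fin n → X,
    (∑ σ : Fin n → Bool,
        sSup {r | ∃ g ∈ G,
          r = (1 / (n : ℝ)) * ∑ i, (if σ i then (1 : ℝ) else -1) * g (x i)}) / 2 ^ n
    ∂(Measure.pi fun _ : Fin n => D)

namespace RademacherBound

/-! ### Bounded differences -/

lemma integrable_of_abs_le {Ω : Type*} [MeasurableSpace Ω] (μ : Measure Ω)
    [IsFiniteMeasure μ] {f : Ω → ℝ} (hf : Measurable f) {B : ℝ} (hB : ∀ x, |f x| ≤ B) :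
    Integrable f μ :=
  Integrable.of_bound hf.aestronglyMeasurable B (Filter.Eventually.of_forall hB)

/-- Hoeffding's lemma for a function of oscillation at most `c`. -/
lemma integral_exp_le_of_osc {X : Type*} [MeasurableSpace X] (D : Measure X)
    [IsProbabilityMeasure D] {h : X → ℝ} (hm : Measurable h) {c : ℝ}
    (hc : ∀ a b, |h a - h b| ≤ c) (t : ℝ) :
    ∫ a, Real.exp (t * h a) ∂D ≤ Real.exp (t * (∫ a, h a ∂D) + c ^ 2 * t ^ 2 / 8) := by
  have : Nonempty X := nonempty_of_isProbabilityMeasure D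
  obtain ⟨x₀⟩ := this
  have hbb : BddBelow (Set.range h) := ⟨h x₀ - c, by
    rintro _ ⟨a, rfl⟩; have := abs_le.1 (hc a x₀); linarith⟩
  set m := ⨅ a, h a with hmdef
  have hlow : ∀ a, m ≤ h a := fun a => ciInf_le hbb a
  have hup : ∀ a, h a ≤ m + c := by
    intro a
    have : Nonempty X := ⟨x₀⟩
    have : h a - c ≤ m := le_ciInf fun b => by have := abs_le.1 (hc a b); linarith
    linarith
  have hS := ProbabilityTheory.hasSubgaussianMGF_of_mem_Icc (μ := D) (X := h) hm.aemeasurable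
    (a := m) (b := m + c) (Filter.Eventually.of_forall fun a => ⟨hlow a, hup a⟩)
  have h1 := hS.mgf_le t
  have hcoe : (((‖m + c - m‖₊ / 2) ^ 2 : NNReal) : ℝ) = c ^ 2 / 4 := by
    push_cast
    rw [add_sub_cancel_left, div_pow, Real.norm_eq_abs, sq_abs]
    norm_num
  rw [hcoe, ProbabilityTheory.mgf] at h1
  have h2 : ∀ a, Real.exp (t * h a)
      = Real.exp (t * ∫ a, h a ∂D) * Real.exp (t * (h a - ∫ a, h a ∂D)) := by
    intro a; rw [← Real.exp_add]; congr 1; ring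
  simp_rw [h2]
  rw [integral_const_mul, Real.exp_add]
  refine mul_le_mul_of_nonneg_left (h1.trans (le_of_eq ?_)) (Real.exp_pos _).le
  congr 1; ring

lemma measurable_cons {X : Type*} [MeasurableSpace X] (n : ℕ) :
    Measurable (fun p : X × (Fin n → X) => (Fin.cons p.1 p.2 : Fin (n + 1) → X)) := by
  refine measurable_pi_iff.2 fun i => ?_
  refine Fin.cases ?_ (fun j => ?_) i
  · simpa using measurable_fst
  · simp only [Fin.cons_succ]; fun_prop

lemma integral_pi_succ {X : Type*} [MeasurableSpace X] (D : Measure X)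
    [IsProbabilityMeasure D] (n : ℕ) {f : (Fin (n + 1) → X) → ℝ} (hf : Measurable f) {B : ℝ}
    (hB : ∀ x, |f x| ≤ B) :
    ∫ x, f x ∂(Measure.pi fun _ : Fin (n + 1) => D)
      = ∫ a, ∫ y, f (Fin.cons a y) ∂(Measure.pi fun _ : Fin n => D) ∂D := by
  have e := (measurePreserving_piFinSuccAbove (fun _ : Fin (n + 1) => D) 0).symm
  rw [← e.integral_comp']
  have key : ∀ p : X × (Fin n → X),
      (MeasurableEquiv.piFinSuccAbove (fun _ : Fin (n + 1) => X) 0).symm p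
        = (Fin.cons p.1 p.2 : Fin (n + 1) → X) := by
    intro p
    simp [MeasurableEquiv.piFinSuccAbove, Fin.insertNthEquiv]
  have : ∀ p : X × (Fin n → X),
      f ((MeasurableEquiv.piFinSuccAbove (fun _ : Fin (n + 1) => X) 0).symm p)
        = f (Fin.cons p.1 p.2) := fun p => by rw [key]
  refine (integral_congr_ae (Filter.Eventually.of_forall this)).trans ?_
  exact integral_prod (fun p : X × (Fin n → X) => f (Fin.cons p.1 p.2))
    (integrable_of_abs_le _ (hf.comp (measurable_cons n)) fun p => hB _)

/-- Sub-Gaussian moment generating function of a function with bounded differences, by induction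
on the number of coordinates: integrating out all but the first coordinate leaves a function of
oscillation at most `c`. -/
lemma integral_exp_pi_le {X : Type*} [MeasurableSpace X] (D : Measure X)
    [IsProbabilityMeasure D] (c t : ℝ) : ∀ (n : ℕ) (f : (Fin n → X) → ℝ) (_ : Measurable f)
    (B : ℝ) (_ : ∀ x, |f x| ≤ B) (_ : ∀ x i y, |f (Function.update x i y) - f x| ≤ c),
    ∫ x, Real.exp (t * f x) ∂(Measure.pi fun _ : Fin n => D)
      ≤ Real.exp (t * (∫ x, f x ∂(Measure.pi fun _ : Fin n => D)) + n * c ^ 2 * t ^ 2 / 8) := by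
  intro n
  induction n with
  | zero =>
    intro f _ B _ _
    have : ∀ x, f x = f Fin.elim0 := fun x => by congr 1; exact Subsingleton.elim _ _
    simp_rw [this]
    simp
  | succ n ih =>
    intro f hf B hB hd
    have hexpB : ∀ x, |Real.exp (t * f x)| ≤ Real.exp (|t| * B) := by
      intro x
      rw [abs_of_pos (Real.exp_pos _)]
      refine Real.exp_le_exp.2 ((le_abs_self _).trans ?_)
      rw [abs_mul]
      exact mul_le_mul_of_nonneg_left (hB x) (abs_nonneg _)
    have hexpm : Measurable fun x => Real.exp (t * f x) := by fun_prop
    rw [integral_pi_succ D n hexpm hexpB, integral_pi_succ D n hf hB]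
    set P := Measure.pi fun _ : Fin n => D with hP
    set h : X → ℝ := fun a => ∫ y, f (Fin.cons a y) ∂P with hh
    have hfc : Measurable fun p : X × (Fin n → X) => f (Fin.cons p.1 p.2) :=
      hf.comp (measurable_cons n)
    have hfa : ∀ a, Measurable fun y : Fin n → X => f (Fin.cons a y) := fun a =>
      hfc.comp measurable_prodMk_left
    have hhm : Measurable h :=
      (hfc.stronglyMeasurable.integral_prod_right (ν := P)).measurable
    have hint : ∀ a, Integrable (fun y => f (Fin.cons a y)) P := fun a =>
      integrable_of_abs_le P (hfa a) fun y => hB _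
    have hosc : ∀ a b, |h a - h b| ≤ c := by
      intro a b
      rw [hh]
      simp only
      rw [← integral_sub (hint a) (hint b)]
      have := norm_integral_le_of_norm_le_const (μ := P)
        (f := fun y => f (Fin.cons a y) - f (Fin.cons b y)) (C := c)
        (Filter.Eventually.of_forall fun y => by
          have := hd (Fin.cons b y) 0 a
          rwa [Fin.update_cons_zero] at this)
      simpa using this
    have hhB : ∀ a, |h a| ≤ B := by
      intro a
      have := norm_integral_le_of_norm_le_const (μ := P)
        (f := fun y => f (Fin.cons a y)) (C := B)
        (Filter.Eventually.of_forall fun y => hB _)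
      simpa using this
    have hstep : ∀ a, ∫ y, Real.exp (t * f (Fin.cons a y)) ∂P
        ≤ Real.exp (t * h a) * Real.exp (n * c ^ 2 * t ^ 2 / 8) := by
      intro a
      rw [← Real.exp_add]
      refine ih (fun y => f (Fin.cons a y)) (hfa a) B (fun y => hB _) ?_
      intro y i z
      have := hd (Fin.cons a y) i.succ z
      rwa [← Fin.cons_update] at this
    have hI1 : Integrable (fun a => ∫ y, Real.exp (t * f (Fin.cons a y)) ∂P) D :=
      (integrable_of_abs_le (D.prod P) (f := fun p : X × (Fin n → X) =>
        Real.exp (t * f (Fin.cons p.1 p.2)))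
        (Real.measurable_exp.comp (hfc.const_mul t)) fun p => hexpB _).integral_prod_left
    have hI2 : Integrable (fun a => Real.exp (t * h a)) D := by
      refine integrable_of_abs_le D (by fun_prop) (B := Real.exp (|t| * B)) fun a => ?_
      rw [abs_of_pos (Real.exp_pos _)]
      refine Real.exp_le_exp.2 ((le_abs_self _).trans ?_)
      rw [abs_mul]
      exact mul_le_mul_of_nonneg_left (hhB a) (abs_nonneg _)
    calc ∫ a, ∫ y, Real.exp (t * f (Fin.cons a y)) ∂P ∂D
        ≤ ∫ a, Real.exp (t * h a) * Real.exp (n * c ^ 2 * t ^ 2 / 8) ∂D :=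
          integral_mono hI1 (hI2.mul_const _) hstep
      _ = (∫ a, Real.exp (t * h a) ∂D) * Real.exp (n * c ^ 2 * t ^ 2 / 8) :=
          integral_mul_const _ _
      _ ≤ Real.exp (t * (∫ a, h a ∂D) + c ^ 2 * t ^ 2 / 8)
            * Real.exp (n * c ^ 2 * t ^ 2 / 8) :=
          mul_le_mul_of_nonneg_right (integral_exp_le_of_osc D hhm hosc t) (Real.exp_pos _).le
      _ = _ := by
          rw [← Real.exp_add]; congr 1; push_cast; ring

/-- McDiarmid's inequality with differences `1/n`. -/
lemma measure_pi_ge_le {X : Type*} [MeasurableSpace X] (D : Measure X)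
    [IsProbabilityMeasure D] {n : ℕ} (hn : 1 ≤ n) {f : (Fin n → X) → ℝ} (hf : Measurable f)
    {B : ℝ} (hB : ∀ x, |f x| ≤ B)
    (hd : ∀ x i y, |f (Function.update x i y) - f x| ≤ 1 / n) {ε : ℝ} (hε : 0 ≤ ε) :
    (Measure.pi fun _ : Fin n => D).real
      {x | (∫ x, f x ∂(Measure.pi fun _ : Fin n => D)) + ε ≤ f x}
      ≤ Real.exp (-2 * n * ε ^ 2) := by
  have hn0 : (n : ℝ) ≠ 0 := by positivity
  -- `4 * n * ε` minimizes the Chernoff exponent `-t * ε + t ^ 2 / (8 * n)`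
  set t : ℝ := 4 * n * ε with ht
  have ht0 : 0 ≤ t := by positivity
  have hint : Integrable (fun x => Real.exp (t * f x)) (Measure.pi fun _ : Fin n => D) := by
    refine integrable_of_abs_le _ (by fun_prop) (B := Real.exp (|t| * B)) fun x => ?_
    rw [abs_of_pos (Real.exp_pos _)]
    refine Real.exp_le_exp.2 ((le_abs_self _).trans ?_)
    rw [abs_mul]
    exact mul_le_mul_of_nonneg_left (hB x) (abs_nonneg _)
  refine (ProbabilityTheory.measure_ge_le_exp_mul_mgf _ ht0 hint).trans ?_
  refine (mul_le_mul_of_nonneg_left (integral_exp_pi_le D (1 / n) t n f hf B hB hd)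
    (Real.exp_pos _).le).trans (le_of_eq ?_)
  rw [← Real.exp_add]
  congr 1
  rw [ht]
  field_simp
  ring

/-! ### Suprema over the class -/

/-- The signed supremum `sup_k (1/n) ∑ᵢ σᵢ u_k(xᵢ)` over a sequence of functions. -/
noncomputable def signedSup {X : Type*} {n : ℕ} (u : ℕ → X → ℝ) (σ : Fin n → Bool)
    (x : Fin n → X) : ℝ :=
  ⨆ k, (1 / (n : ℝ)) * ∑ i, (if σ i then (1 : ℝ) else -1) * u k (x i)

/-- The one-sided deviation `sup_k (E u_k - (1/n) ∑ᵢ u_k(xᵢ))`. -/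
noncomputable def devSup {X : Type*} [MeasurableSpace X] (D : Measure X) {n : ℕ}
    (u : ℕ → X → ℝ) (x : Fin n → X) : ℝ :=
  ⨆ k, ((∫ y, u k y ∂D) - (1 / (n : ℝ)) * ∑ i, u k (x i))

/-- The two-sample supremum `sup_k (1/n) ∑ᵢ (u_k(zᵢ.1) - u_k(zᵢ.2))`. -/
noncomputable def pairSup {X : Type*} {n : ℕ} (u : ℕ → X → ℝ) (z : Fin n → X × X) : ℝ :=
  ⨆ k, (1 / (n : ℝ)) * ∑ i, (u k (z i).1 - u k (z i).2)

lemma bddAbove_of_abs_le {f : ℕ → ℝ} {B : ℝ} (h : ∀ k, |f k| ≤ B) :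
    BddAbove (Set.range f) :=
  ⟨B, by rintro _ ⟨k, rfl⟩; exact (abs_le.1 (h k)).2⟩

lemma abs_iSup_le {f : ℕ → ℝ} {B : ℝ} (h : ∀ k, |f k| ≤ B) : |⨆ k, f k| ≤ B := by
  refine abs_le.2 ⟨?_, ciSup_le fun k => (abs_le.1 (h k)).2⟩
  exact (abs_le.1 (h 0)).1.trans (le_ciSup (bddAbove_of_abs_le h) 0)

lemma abs_avg_le {n : ℕ} {a : Fin n → ℝ} {B : ℝ} (hB : 0 ≤ B) (h : ∀ i, |a i| ≤ B) :
    |(1 / (n : ℝ)) * ∑ i, a i| ≤ B := by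
  rw [abs_mul, abs_of_nonneg (by positivity : (0 : ℝ) ≤ 1 / n)]
  have h1 : |∑ i, a i| ≤ n * B :=
    (Finset.abs_sum_le_sum_abs _ _).trans
      ((Finset.sum_le_sum fun i _ => h i).trans (by simp))
  rcases Nat.eq_zero_or_pos n with rfl | hn
  · simpa using hB
  · have : (0 : ℝ) < n := by exact_mod_cast hn
    calc 1 / (n : ℝ) * |∑ i, a i| ≤ 1 / (n : ℝ) * (n * B) := by gcongr
      _ = B := by field_simp

lemma abs_signed_le {X : Type*} {n : ℕ} {u : ℕ → X → ℝ} (hb : ∀ k x, |u k x| ≤ 1)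
    (σ : Fin n → Bool) (x : Fin n → X) (k : ℕ) :
    |(1 / (n : ℝ)) * ∑ i, (if σ i then (1 : ℝ) else -1) * u k (x i)| ≤ 1 := by
  refine abs_avg_le zero_le_one fun i => ?_
  split_ifs <;> simpa using hb k (x i)

lemma abs_pair_le {X : Type*} {n : ℕ} {u : ℕ → X → ℝ} (hb : ∀ k x, |u k x| ≤ 1)
    (z : Fin n → X × X) (k : ℕ) :
    |(1 / (n : ℝ)) * ∑ i, (u k (z i).1 - u k (z i).2)| ≤ 2 := by
  refine abs_avg_le zero_le_two fun i => ?_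
  have h1 := hb k (z i).1
  have h2 := hb k (z i).2
  rw [abs_le] at *
  constructor <;> linarith

lemma measurable_devSup {X : Type*} [MeasurableSpace X] (D : Measure X) {n : ℕ} {u : ℕ → X → ℝ}
    (hm : ∀ k, Measurable (u k)) :
    Measurable (devSup D u : (Fin n → X) → ℝ) := by
  unfold devSup
  exact Measurable.iSup fun k => by fun_prop

/-- The average of the signed suprema over all sign patterns and samples, i.e. the Rademacher
complexity of the range of `u`. -/
noncomputable def rad {X : Type*} [MeasurableSpace X] (D : Measure X) (n : ℕ)
    (u : ℕ → X → ℝ) : ℝ :=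
  (∑ σ : Fin n → Bool, ∫ x, signedSup u σ x ∂(Measure.pi fun _ : Fin n => D)) / 2 ^ n

/-- Complementing every sign permutes the sign patterns. -/
lemma sum_not {n : ℕ} (T : (Fin n → Bool) → ℝ) :
    ∑ σ : Fin n → Bool, T (fun i => !σ i) = ∑ σ, T σ := by
  have hinv : Function.Involutive fun (σ : Fin n → Bool) i => !σ i := fun σ => by simp
  exact Equiv.sum_comp hinv.toPerm T

lemma rad_neg {X : Type*} [MeasurableSpace X] (D : Measure X) {n : ℕ} {u : ℕ → X → ℝ} :
    rad D n (fun k x => -u k x) = rad D n u := by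
  unfold rad
  congr 1
  rw [← sum_not]
  refine Finset.sum_congr rfl fun σ _ => integral_congr_ae (Filter.Eventually.of_forall fun x => ?_)
  unfold signedSup
  refine iSup_congr fun k => ?_
  congr 1
  refine Finset.sum_congr rfl fun i _ => ?_
  cases h : σ i <;> simp [h]

section Bounds

variable {X : Type*} [MeasurableSpace X] (D : Measure X) [IsProbabilityMeasure D]
  {n : ℕ} {u : ℕ → X → ℝ}

lemma abs_integral_le_one (hb : ∀ k x, |u k x| ≤ 1) (k : ℕ) :
    |∫ y, u k y ∂D| ≤ 1 := by
  have := norm_integral_le_of_norm_le_const (μ := D) (f := u k) (C := 1)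
    (Filter.Eventually.of_forall fun y => hb k y)
  simpa using this

lemma abs_dev_le (hb : ∀ k x, |u k x| ≤ 1) (x : Fin n → X) (k : ℕ) :
    |(∫ y, u k y ∂D) - (1 / (n : ℝ)) * ∑ i, u k (x i)| ≤ 2 := by
  have h1 := abs_integral_le_one D hb k
  have h2 : |(1 / (n : ℝ)) * ∑ i, u k (x i)| ≤ 1 := abs_avg_le zero_le_one fun i => hb k (x i)
  rw [abs_le] at *
  constructor <;> linarith

lemma measurable_signedSup (hm : ∀ k, Measurable (u k)) (σ : Fin n → Bool) :
    Measurable (signedSup u σ) := by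
  unfold signedSup
  exact Measurable.iSup fun k => by fun_prop

lemma measurable_pairSup (hm : ∀ k, Measurable (u k)) :
    Measurable (pairSup u : (Fin n → X × X) → ℝ) := by
  unfold pairSup
  exact Measurable.iSup fun k => by fun_prop

lemma devSup_update_le (hb : ∀ k x, |u k x| ≤ 1) (hosc : ∀ k x y, |u k x - u k y| ≤ 1)
    (x : Fin n → X) (i : Fin n) (y : X) :
    devSup D u (Function.update x i y) ≤ devSup D u x + 1 / n := by
  refine ciSup_le fun k => ?_
  have h1 := le_ciSup (bddAbove_of_abs_le (abs_dev_le D hb x)) k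
  have h2 : ∑ j, u k (Function.update x i y j) = ∑ j, u k (x j) + (u k y - u k (x i)) := by
    rw [← sub_eq_iff_eq_add', ← Finset.sum_sub_distrib, Finset.sum_eq_single i]
    · simp
    · intro j _ hj; simp [Function.update_of_ne hj]
    · simp
  have h3 : (1 / (n : ℝ)) * (u k (x i) - u k y) ≤ 1 / n :=
    mul_le_of_le_one_right (by positivity) (abs_le.1 (hosc k (x i) y)).2
  rw [h2]
  unfold devSup
  linarith [mul_add (1 / (n : ℝ)) (∑ j, u k (x j)) (u k y - u k (x i)),
    mul_sub (1 / (n : ℝ)) (u k (x i)) (u k y), mul_sub (1 / (n : ℝ)) (u k y) (u k (x i))]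

lemma abs_devSup_update_sub_le (hb : ∀ k x, |u k x| ≤ 1)
    (hosc : ∀ k x y, |u k x - u k y| ≤ 1) (x : Fin n → X) (i : Fin n) (y : X) :
    |devSup D u (Function.update x i y) - devSup D u x| ≤ 1 / n := by
  have h1 := devSup_update_le D hb hosc x i y
  have h2 := devSup_update_le D hb hosc (Function.update x i y) i (x i)
  rw [Function.update_idem, Function.update_eq_self] at h2
  rw [abs_le]
  constructor <;> linarith

/-! ### Symmetrization -/

/-- The mean of `devSup` is at most that of `pairSup`: the true mean of `u_k` is the expectation of
the empirical mean of an independent ghost sample, and the supremum is convex. -/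
lemma integral_devSup_le_pairSup (hn : 1 ≤ n) (hm : ∀ k, Measurable (u k))
    (hb : ∀ k x, |u k x| ≤ 1) :
    ∫ x, devSup D u x ∂(Measure.pi fun _ : Fin n => D)
      ≤ ∫ z, pairSup u z ∂(Measure.pi fun _ : Fin n => D.prod D) := by
  set P := Measure.pi fun _ : Fin n => D with hP
  have hn0 : (n : ℝ) ≠ 0 := by positivity
  set F : (Fin n → X) × (Fin n → X) → ℝ := fun p => pairSup u fun i => (p.1 i, p.2 i) with hF
  have hFm : Measurable F := (measurable_pairSup hm).comp (by fun_prop)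
  have hFb : ∀ p, |F p| ≤ 2 := fun p => abs_iSup_le (abs_pair_le hb _)
  have e := measurePreserving_arrowProdEquivProdArrow X X (Fin n) (fun _ => D) (fun _ => D)
  have h1 : ∫ z, pairSup u z ∂(Measure.pi fun _ : Fin n => D.prod D)
      = ∫ p, F p ∂(P.prod P) := by
    rw [hP, ← e.integral_comp']
    rfl
  rw [h1, integral_prod_symm F (integrable_of_abs_le _ hFm hFb)]
  refine integral_mono
    (integrable_of_abs_le P (measurable_devSup D hm) fun x => abs_iSup_le (abs_dev_le D hb x))
    (integrable_of_abs_le _ hFm hFb).integral_prod_right ?_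
  intro x
  refine ciSup_le fun k => ?_
  have hi : ∀ i : Fin n, Integrable (fun x' : Fin n → X => u k (x' i)) P := fun i =>
    integrable_of_abs_le P (by have := hm k; fun_prop) fun x' => hb k _
  have hev : ∀ i : Fin n, ∫ x' : Fin n → X, u k (x' i) ∂P = ∫ y, u k y ∂D := by
    intro i
    have := (measurePreserving_eval (fun _ : Fin n => D) i)
    rw [← this.map_eq, integral_map (measurable_pi_apply i).aemeasurable
      (hm k).aestronglyMeasurable]
  have hi' : ∀ i : Fin n, Integrable (fun x' : Fin n → X => u k (x' i) - u k (x i)) P :=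
    fun i => (hi i).sub (integrable_const _)
  have h2 : (∫ y, u k y ∂D) - (1 / (n : ℝ)) * ∑ i, u k (x i)
      = ∫ x', (1 / (n : ℝ)) * ∑ i, (u k (x' i) - u k (x i)) ∂P := by
    rw [integral_const_mul, integral_finsetSum _ fun i _ => hi' i]
    have : ∀ i : Fin n, ∫ x' : Fin n → X, (u k (x' i) - u k (x i)) ∂P
        = (∫ y, u k y ∂D) - u k (x i) := by
      intro i
      rw [integral_sub (hi i) (integrable_const _), hev]
      simp
    simp_rw [this]
    rw [Finset.sum_sub_distrib]
    simp
    field_simp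
  rw [h2]
  refine integral_mono ?_ ?_ ?_
  · exact (integrable_finsetSum _ fun i _ => hi' i).const_mul _
  · exact integrable_of_abs_le P (hFm.comp measurable_prodMk_right) fun x' => hFb _
  · intro x'
    exact le_ciSup (bddAbove_of_abs_le (abs_pair_le hb fun i => (x' i, x i))) k

/-- For any sign pattern, exchanging the coordinates with negative sign preserves the law of the
pair of samples, so the two-sample supremum splits into two signed suprema. -/
lemma integral_pairSup_le (hm : ∀ k, Measurable (u k)) (hb : ∀ k x, |u k x| ≤ 1)
    (σ : Fin n → Bool) :
    ∫ z, pairSup u z ∂(Measure.pi fun _ : Fin n => D.prod D)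
      ≤ (∫ x, signedSup u σ x ∂(Measure.pi fun _ : Fin n => D))
        + ∫ x, signedSup u (fun i => !σ i) x ∂(Measure.pi fun _ : Fin n => D) := by
  set Q := Measure.pi fun _ : Fin n => D.prod D with hQ
  set sw : (Fin n → X × X) → (Fin n → X × X) :=
    fun z i => (if σ i then id else Prod.swap) (z i) with hsw
  have hswp : MeasurePreserving sw Q Q := by
    refine measurePreserving_pi _ _ fun i => ?_
    split_ifs
    · exact MeasurePreserving.id _
    · exact Measure.measurePreserving_swap
  have hf : MeasurePreserving (fun (z : Fin n → X × X) i => (z i).1) Q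
      (Measure.pi fun _ : Fin n => D) := measurePreserving_pi _ _ fun i => measurePreserving_fst
  have hs : MeasurePreserving (fun (z : Fin n → X × X) i => (z i).2) Q
      (Measure.pi fun _ : Fin n => D) := measurePreserving_pi _ _ fun i => measurePreserving_snd
  have hSi : ∀ τ : Fin n → Bool, Integrable (signedSup u τ) (Measure.pi fun _ : Fin n => D) :=
    fun τ => integrable_of_abs_le _ (measurable_signedSup hm τ)
      fun x => abs_iSup_le (abs_signed_le hb τ x)
  have e0 : ∫ z, pairSup u z ∂Q = ∫ z, pairSup u (sw z) ∂Q := by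
    conv_lhs => rw [← hswp.map_eq]
    exact integral_map hswp.aemeasurable (measurable_pairSup hm).aestronglyMeasurable
  have e1 : ∫ x, signedSup u σ x ∂(Measure.pi fun _ : Fin n => D)
      = ∫ z, signedSup u σ (fun i => (z i).1) ∂Q := by
    rw [← hf.map_eq]
    exact integral_map hf.aemeasurable (measurable_signedSup hm _).aestronglyMeasurable
  have e2 : ∫ x, signedSup u (fun i => !σ i) x ∂(Measure.pi fun _ : Fin n => D)
      = ∫ z, signedSup u (fun i => !σ i) (fun i => (z i).2) ∂Q := by
    rw [← hs.map_eq]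
    exact integral_map hs.aemeasurable (measurable_signedSup hm _).aestronglyMeasurable
  have i1 : Integrable (fun z : Fin n → X × X => signedSup u σ fun i => (z i).1) Q :=
    hf.integrable_comp_of_integrable (hSi σ)
  have i2 : Integrable (fun z : Fin n → X × X => signedSup u (fun i => !σ i) fun i => (z i).2) Q :=
    hs.integrable_comp_of_integrable (hSi fun i => !σ i)
  rw [e0, e1, e2, ← integral_add i1 i2]
  refine integral_mono ?_ (i1.add i2) ?_
  · exact integrable_of_abs_le Q ((measurable_pairSup hm).comp hswp.measurable)
      fun z => abs_iSup_le (abs_pair_le hb _)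
  · intro z
    refine ciSup_le fun k => ?_
    have a1 := le_ciSup (bddAbove_of_abs_le (abs_signed_le hb σ fun i => (z i).1)) k
    have a2 := le_ciSup (bddAbove_of_abs_le
      (abs_signed_le hb (fun i => !σ i) fun i => (z i).2)) k
    refine le_trans (le_of_eq ?_) (add_le_add a1 a2)
    rw [← mul_add, ← Finset.sum_add_distrib]
    congr 1
    refine Finset.sum_congr rfl fun i _ => ?_
    rw [hsw]
    cases h : σ i <;> simp [h] <;> ring

lemma integral_devSup_le (hn : 1 ≤ n) (hm : ∀ k, Measurable (u k))
    (hb : ∀ k x, |u k x| ≤ 1) :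
    ∫ x, devSup D u x ∂(Measure.pi fun _ : Fin n => D) ≤ 2 * rad D n u := by
  refine (integral_devSup_le_pairSup D hn hm hb).trans ?_
  set A := ∫ z, pairSup u z ∂(Measure.pi fun _ : Fin n => D.prod D) with hA
  set T : (Fin n → Bool) → ℝ :=
    fun σ => ∫ x, signedSup u σ x ∂(Measure.pi fun _ : Fin n => D) with hT
  have h1 : ∑ _σ : Fin n → Bool, A ≤ ∑ σ, (T σ + T fun i => !σ i) :=
    Finset.sum_le_sum fun σ _ => integral_pairSup_le D hm hb σ
  rw [Finset.sum_add_distrib, sum_not] at h1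
  simp only [Finset.sum_const, Finset.card_univ, Fintype.card_fun, Fintype.card_bool,
    Fintype.card_fin, nsmul_eq_mul, Nat.cast_pow, Nat.cast_ofNat] at h1
  unfold rad
  rw [← mul_div_assoc, le_div_iff₀ (by positivity)]
  linarith

lemma rademacher_range (hm : ∀ k, Measurable (u k)) (hb : ∀ k x, |u k x| ≤ 1) :
    rademacher n D (Set.range u) = rad D n u := by
  have hs : ∀ (σ : Fin n → Bool) (x : Fin n → X), sSup {r | ∃ g ∈ Set.range u,
      r = (1 / (n : ℝ)) * ∑ i, (if σ i then (1 : ℝ) else -1) * g (x i)} = signedSup u σ x := by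
    intro σ x
    unfold signedSup iSup
    congr 1
    ext r
    constructor
    · rintro ⟨_, ⟨k, rfl⟩, rfl⟩
      exact ⟨k, rfl⟩
    · rintro ⟨k, rfl⟩
      exact ⟨u k, ⟨k, rfl⟩, rfl⟩
  unfold rademacher rad
  simp_rw [hs]
  rw [integral_div, integral_finsetSum]
  intro σ _
  exact integrable_of_abs_le _ (measurable_signedSup hm σ)
    fun x => abs_iSup_le (abs_signed_le hb σ x)

/-- The one-sided uniform deviation bound. -/
lemma measure_devSup_le (hn : 1 ≤ n) (hm : ∀ k, Measurable (u k))
    (hb : ∀ k x, |u k x| ≤ 1) (hosc : ∀ k x y, |u k x - u k y| ≤ 1) {ε : ℝ} (hε : 0 ≤ ε) :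
    (Measure.pi fun _ : Fin n => D).real {x | 2 * rad D n u + ε ≤ devSup D u x}
      ≤ Real.exp (-2 * n * ε ^ 2) := by
  refine le_trans (measureReal_mono ?_) (measure_pi_ge_le D hn (measurable_devSup D hm)
    (fun x => abs_iSup_le (abs_dev_le D hb x)) (abs_devSup_update_sub_le D hb hosc) hε)
  intro x hx
  have := integral_devSup_le D hn hm hb
  simp only [Set.mem_ofPred_eq] at hx ⊢
  linarith

end Bounds

end RademacherBound

open RademacherBound in
/-- Rademacher generalization bound. For a countable nonempty class G of
measurable functions X → [0,1], with probability at least 1 − δ over x ∼ D^n, every g ∈ G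
satisfies |E_D g − (1/n) ∑ᵢ g(xᵢ)| ≤ 2 R_{n,D}(G) + √(log(2/δ)/(2n)). -/
theorem rademacher_generalization_bound {X : Type*} [MeasurableSpace X]
    (D : Measure X) [IsProbabilityMeasure D]
    (G : Set (X → ℝ)) (hGc : G.Countable) (hGne : G.Nonempty)
    (hGm : ∀ g ∈ G, Measurable g) (hGb : ∀ g ∈ G, ∀ x, g x ∈ Set.Icc (0 : ℝ) 1)
    (n : ℕ) (hn : 1 ≤ n) (δ : ℝ) (hδ : 0 < δ) :
    (Measure.pi fun _ : Fin n => D)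
      {x | ¬ ∀ g ∈ G,
        |(∫ y, g y ∂D) - (1 / (n : ℝ)) * ∑ i, g (x i)| ≤
          2 * rademacher n D G + Real.sqrt (Real.log (2 / δ) / (2 * n))} ≤
      ENNReal.ofReal δ := by
  obtain ⟨u, rfl⟩ := hGc.exists_eq_range hGne
  have hm : ∀ k, Measurable (u k) := fun k => hGm _ ⟨k, rfl⟩
  have h01 : ∀ k x, u k x ∈ Set.Icc (0 : ℝ) 1 := fun k => hGb _ ⟨k, rfl⟩
  have hb : ∀ k x, |u k x| ≤ 1 := fun k x => by
    have := h01 k x; rw [abs_le]; constructor <;> linarith [this.1, this.2]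
  have hosc : ∀ k x y, |u k x - u k y| ≤ 1 := fun k x y => by
    have h1 := h01 k x
    have h2 := h01 k y
    rw [abs_le]; constructor <;> linarith [h1.1, h1.2, h2.1, h2.2]
  rcases le_or_gt 1 δ with hδ1 | hδ1
  · exact prob_le_one.trans (by simpa using hδ1)
  rw [rademacher_range D hm hb]
  have hn' : (0 : ℝ) < n := by exact_mod_cast hn
  set ε := Real.sqrt (Real.log (2 / δ) / (2 * n)) with hε
  have hlog : 0 ≤ Real.log (2 / δ) := Real.log_nonneg (by rw [le_div_iff₀ hδ]; linarith)
  have hexp : Real.exp (-2 * n * ε ^ 2) = δ / 2 := by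
    rw [hε, Real.sq_sqrt (by positivity)]
    have : -2 * (n : ℝ) * (Real.log (2 / δ) / (2 * n)) = -Real.log (2 / δ) := by field_simp
    rw [this, Real.exp_neg, Real.exp_log (by positivity), inv_div]
  have hm' : ∀ k, Measurable fun x => -u k x := fun k => (hm k).neg
  have hb' : ∀ k x, |-u k x| ≤ 1 := fun k x => by rw [abs_neg]; exact hb k x
  have hosc' : ∀ k x y, |-u k x - -u k y| ≤ 1 := fun k x y => by
    rw [neg_sub_neg]; exact hosc k y x
  have h1 := measure_devSup_le D hn hm hb hosc (Real.sqrt_nonneg _ : 0 ≤ ε)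
  have h2 := measure_devSup_le (u := fun k x => -u k x) D hn hm' hb' hosc'
    (Real.sqrt_nonneg _ : 0 ≤ ε)
  rw [rad_neg] at h2
  rw [hexp] at h1 h2
  rw [← ofReal_measureReal]
  refine ENNReal.ofReal_le_ofReal ?_
  refine le_trans (measureReal_mono (s₂ := {x | 2 * rad D n u + ε ≤ devSup D u x} ∪
    {x | 2 * rad D n u + ε ≤ devSup D (fun k x => -u k x) x}) ?_)
    ((measureReal_union_le _ _).trans (by linarith))
  intro x hx
  simp only [Set.mem_ofPred_eq, Set.forall_mem_range, not_forall, not_le] at hx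
  obtain ⟨k, hk⟩ := hx
  rcases lt_abs.1 hk with hk | hk
  · exact Or.inl (hk.le.trans (le_ciSup (bddAbove_of_abs_le (abs_dev_le D hb x)) k))
  · refine Or.inr (hk.le.trans (le_trans (le_of_eq ?_)
      (le_ciSup (bddAbove_of_abs_le (abs_dev_le D hb' x)) k)))
    rw [integral_neg, Finset.sum_neg_distrib]
    ring
end

section
/- Let H be a countable nonempty set of measurable maps from a measurable space X to Δ_K, let D be a probability measure on X, and let n ≥ 1. For any δ > 0, with probability at least 1 − δ over an i.i.d. sample x = (x₁,…,x_n) drawn from D^n, the following holds simultaneously for all h, h′ ∈ H: |dis_D(h′,h) − dis_{D̂_x}(h′,h)| ≤ 2 R_{n,D}(G_Γ H) + √(log(2/δ)/(2n)), where D̂_x is the empirical measure of the sample. -/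
/-!
The proof is McDiarmid's inequality combined with symmetrization.

For a countable family `g i : X → ℝ` let `supDev D g x = sup_i (E g_i - (1/n) ∑ⱼ g_i(xⱼ))`. If every
`g i` has oscillation at most `1`, changing one sample point changes `supDev` by at most `1/n`, so
McDiarmid's inequality (`mcdiarmid`) gives `P(supDev ≥ E supDev + ε) ≤ exp(-2nε²)`. McDiarmid's
inequality is obtained by bounding the moment generating function by induction on the number of
coordinates: averaging out the first coordinate costs one application of Hoeffding's lemma, and the
averaged function still has bounded differences.

The mean is bounded by `E supDev ≤ 2 R` (`integral_supDev_le`): replacing `E g_i` by the average over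
a ghost sample bounds it by `E sup_i (1/n) ∑ⱼ (g_i(x'ⱼ) - g_i(xⱼ))`; for each sign pattern `σ`,
exchanging `xⱼ` and `x'ⱼ` where `σⱼ = -1` leaves the law of the pairs unchanged, and the supremum of
the resulting sum splits into two signed suprema. Averaging over `σ` gives `2 R`.

The two-sided bound is the union of the one-sided bounds for the family `Γ(h₁(·), h₂(·))` and for its
negative, which has the same Rademacher complexity (`radFamily_neg`), each with tail `δ/2`.
-/

open MeasureTheory

/-- The induced class G_Γ H = { x ↦ Γ(h₁(x), h₂(x)) : h₁, h₂ ∈ H }. -/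
def GGam {X : Type*} {K : ℕ} (H : Set (X → Fin K → ℝ)) : Set (X → ℝ) :=
  {g | ∃ h₁ ∈ H, ∃ h₂ ∈ H, g = fun x => Gam (h₁ x) (h₂ x)}

/-! ### McDiarmid's inequality on a product space -/

lemma integrable_of_abs_le {Ω : Type*} [MeasurableSpace Ω] {μ : Measure Ω} [IsFiniteMeasure μ]
    {f : Ω → ℝ} (hf : Measurable f) {B : ℝ} (hB : ∀ x, |f x| ≤ B) : Integrable f μ :=
  Integrable.of_bound hf.aestronglyMeasurable B (Filter.Eventually.of_forall hB)

lemma integrable_exp_of_abs_le {Ω : Type*} [MeasurableSpace Ω] {μ : Measure Ω} [IsFiniteMeasure μ]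
    {f : Ω → ℝ} (hf : Measurable f) {B : ℝ} (hB : ∀ x, |f x| ≤ B) :
    Integrable (fun x => Real.exp (f x)) μ := by
  refine integrable_of_abs_le (B := Real.exp B) hf.exp fun x => ?_
  rw [abs_of_pos (Real.exp_pos _)]
  exact Real.exp_le_exp.2 ((le_abs_self _).trans (hB x))

lemma abs_integral_le_of_abs_le {Ω : Type*} [MeasurableSpace Ω] {μ : Measure Ω}
    [IsProbabilityMeasure μ] {f : Ω → ℝ} {B : ℝ} (hB : ∀ x, |f x| ≤ B) :
    |∫ x, f x ∂μ| ≤ B := by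
  simpa using norm_integral_le_of_norm_le_const (μ := μ) (f := f) (C := B)
    (Filter.Eventually.of_forall hB)

/-- Hoeffding's lemma with the range hypothesis stated as a bound on the oscillation of `u`. -/
lemma hoeffding_of_oscillation {X : Type*} [MeasurableSpace X] (D : Measure X)
    [IsProbabilityMeasure D] {c : ℝ} (t : ℝ) {u : X → ℝ} (hu : Measurable u)
    (hc : ∀ a b, u a - u b ≤ c) :
    ∫ a, Real.exp (t * (u a - ∫ b, u b ∂D)) ∂D ≤ Real.exp (c ^ 2 * t ^ 2 / 8) := by
  have hne : Nonempty X := nonempty_of_isProbabilityMeasure D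
  have hbdd : BddBelow (Set.range u) :=
    ⟨u hne.some - c, by rintro _ ⟨a, rfl⟩; linarith [hc hne.some a]⟩
  have hmem : ∀ᵐ a ∂D, u a ∈ Set.Icc (⨅ b, u b) ((⨅ b, u b) + c) := by
    refine Filter.Eventually.of_forall fun a => ⟨ciInf_le hbdd a, ?_⟩
    have : u a - c ≤ ⨅ b, u b := le_ciInf fun b => by linarith [hc a b]
    linarith
  have h := (ProbabilityTheory.hasSubgaussianMGF_of_mem_Icc hu.aemeasurable hmem).mgf_le t
  refine h.trans (le_of_eq ?_)
  congr 1
  simp only [add_sub_cancel_left, NNReal.coe_pow, NNReal.coe_div, coe_nnnorm, Real.norm_eq_abs,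
    NNReal.coe_ofNat, div_pow, sq_abs]
  ring

/-- A function with bounded differences `c` in each of `n` independent coordinates is sub-Gaussian with
variance proxy `n c² / 4`. -/
lemma mcdiarmid_mgf {X : Type*} [MeasurableSpace X] (D : Measure X)
    [IsProbabilityMeasure D] (c t : ℝ) :
    ∀ (n : ℕ) (f : (Fin n → X) → ℝ), Measurable f → (∃ B, ∀ x, |f x| ≤ B) →
      (∀ i x a, f (Function.update x i a) - f x ≤ c) →
      ∫ x, Real.exp (t * (f x - ∫ y, f y ∂(Measure.pi fun _ : Fin n => D)))
        ∂(Measure.pi fun _ : Fin n => D) ≤ Real.exp (n * (c ^ 2 * t ^ 2 / 8)) := by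
  intro n
  induction n with
  | zero =>
    intro f _ _ _
    have hconst : ∀ x, f x = f default := fun x => congrArg f (Subsingleton.elim _ _)
    simp [hconst]
  | succ n ih =>
    rintro f hf ⟨B, hB⟩ hc
    set P := Measure.pi fun _ : Fin n => D with hP
    have mp := (measurePreserving_piFinSuccAbove (fun _ : Fin (n + 1) => D) 0).symm
    set φ : X × (Fin n → X) → ℝ :=
      fun p => f ((MeasurableEquiv.piFinSuccAbove (fun _ : Fin (n + 1) => X) 0).symm p) with hφ
    have hφcons : ∀ a y, φ (a, y) = f (Fin.cons a y) := fun a y => by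
      simp [hφ, MeasurableEquiv.piFinSuccAbove, Fin.consEquiv]
    have hφm : Measurable φ := hf.comp (MeasurableEquiv.measurable _)
    have hφB : ∀ p, |φ p| ≤ B := fun p => hB _
    -- `g` averages out the first coordinate
    set g : (Fin n → X) → ℝ := fun y => ∫ a, φ (a, y) ∂D with hg
    have hgm : Measurable g := (hφm.stronglyMeasurable.integral_prod_left').measurable
    have hgB : ∀ y, |g y| ≤ B := fun y => abs_integral_le_of_abs_le fun a => hφB _
    have hφi : ∀ y, Integrable (fun a => φ (a, y)) D := fun y =>
      integrable_of_abs_le (hφm.comp measurable_prodMk_right) fun a => hφB _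
    have hfg : ∫ x, f x ∂(Measure.pi fun _ : Fin (n + 1) => D) = ∫ y, g y ∂P := by
      rw [← mp.integral_comp' f]
      exact integral_prod_symm φ (integrable_of_abs_le hφm hφB)
    have hgc : ∀ i y b, g (Function.update y i b) - g y ≤ c := by
      intro i y b
      rw [hg, ← integral_sub (hφi _) (hφi _)]
      calc _ ≤ ∫ _, c ∂D := by
            refine integral_mono ((hφi _).sub (hφi _)) (integrable_const _) fun a => ?_
            simp only [hφcons, Fin.cons_update]
            exact hc _ _ _
        _ = c := by simp
    have hIH := ih g hgm ⟨B, hgB⟩ hgc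
    rw [hfg]
    set m := ∫ y, g y ∂P
    have hmB : |m| ≤ B := abs_integral_le_of_abs_le hgB
    rw [← mp.integral_comp' (fun x => Real.exp (t * (f x - m)))]
    change ∫ p, Real.exp (t * (φ p - m)) ∂(D.prod P) ≤ _
    have hexp : Integrable (fun p => Real.exp (t * (φ p - m))) (D.prod P) := by
      refine integrable_exp_of_abs_le (B := |t| * (B + B)) ((hφm.sub_const _).const_mul _) ?_
      intro p
      rw [abs_mul]
      gcongr
      exact (abs_sub _ _).trans (add_le_add (hφB p) hmB)
    have hexpg : Integrable (fun y => Real.exp (t * (g y - m))) P := by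
      refine integrable_exp_of_abs_le (B := |t| * (B + B)) ((hgm.sub_const _).const_mul _) ?_
      intro p
      rw [abs_mul]
      gcongr
      exact (abs_sub _ _).trans (add_le_add (hgB p) hmB)
    rw [integral_prod_symm _ hexp]
    calc ∫ y, ∫ a, Real.exp (t * (φ (a, y) - m)) ∂D ∂P
        ≤ ∫ y, Real.exp (c ^ 2 * t ^ 2 / 8) * Real.exp (t * (g y - m)) ∂P := by
          refine integral_mono hexp.integral_prod_right (hexpg.const_mul _) fun y => ?_
          have hsplit : ∀ a, Real.exp (t * (φ (a, y) - m))
              = Real.exp (t * (φ (a, y) - g y)) * Real.exp (t * (g y - m)) := by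
            intro a
            rw [← Real.exp_add]
            ring_nf
          simp only [hsplit]
          rw [integral_mul_const]
          gcongr
          refine hoeffding_of_oscillation D t (hφm.comp measurable_prodMk_right) fun a b => ?_
          simpa only [Function.comp_apply, hφcons, Fin.update_cons_zero] using hc 0 (Fin.cons b y) a
      _ ≤ Real.exp (c ^ 2 * t ^ 2 / 8) * Real.exp (n * (c ^ 2 * t ^ 2 / 8)) := by
          rw [integral_const_mul]
          gcongr
      _ = Real.exp ((n + 1 : ℕ) * (c ^ 2 * t ^ 2 / 8)) := by
          rw [← Real.exp_add]
          push_cast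
          ring_nf

/-- **McDiarmid's inequality** for i.i.d. coordinates and differences bounded by `1 / n`. -/
lemma mcdiarmid {X : Type*} [MeasurableSpace X] (D : Measure X)
    [IsProbabilityMeasure D] {n : ℕ} (hn : 1 ≤ n) {f : (Fin n → X) → ℝ} (hf : Measurable f)
    {B : ℝ} (hB : ∀ x, |f x| ≤ B)
    (hc : ∀ i x a, f (Function.update x i a) - f x ≤ 1 / n) {ε : ℝ} (hε : 0 ≤ ε) :
    (Measure.pi fun _ : Fin n => D).real
      {x | ε ≤ f x - ∫ y, f y ∂(Measure.pi fun _ : Fin n => D)} ≤ Real.exp (-2 * n * ε ^ 2) := by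
  set P := Measure.pi fun _ : Fin n => D with hP
  have hn0 : (0 : ℝ) < n := by exact_mod_cast hn
  have hsub : ProbabilityTheory.HasSubgaussianMGF (fun x => f x - ∫ y, f y ∂P)
      (1 / (4 * n)) P := by
    constructor
    · intro t
      refine integrable_exp_of_abs_le (B := |t| * (B + B)) ((hf.sub_const _).const_mul _) ?_
      intro p
      rw [abs_mul]
      gcongr
      exact (abs_sub _ _).trans (add_le_add (hB p) (abs_integral_le_of_abs_le hB))
    · intro t
      refine (mcdiarmid_mgf D (1 / n) t n f hf ⟨B, hB⟩ hc).trans (le_of_eq ?_)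
      congr 1
      push_cast
      field_simp
      ring
  refine (hsub.measure_ge_le hε).trans (le_of_eq ?_)
  congr 1
  push_cast
  field_simp
  norm_num

/-! ### Rademacher averages and symmetrization -/

/-- The signed empirical average `(1/n) ∑ⱼ σⱼ g(xⱼ)`, with `true ↦ 1` and `false ↦ -1`. -/
noncomputable def signedAvg {X : Type*} {n : ℕ} (σ : Fin n → Bool) (g : X → ℝ)
    (x : Fin n → X) : ℝ :=
  (1 / (n : ℝ)) * ∑ j, (if σ j then (1 : ℝ) else -1) * g (x j)

/-- The Rademacher complexity of an indexed family, so that suprema are `⨆` over the index type. -/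
noncomputable def radFamily {X ι : Type*} [MeasurableSpace X] (n : ℕ) (D : Measure X)
    (g : ι → X → ℝ) : ℝ :=
  ∫ x : Fin n → X, (∑ σ : Fin n → Bool, ⨆ i, signedAvg σ (g i) x) / 2 ^ n
    ∂(Measure.pi fun _ : Fin n => D)

/-- The one-sided uniform deviation `sup_i (E g_i - (1/n) ∑ⱼ g_i(xⱼ))`. -/
noncomputable def supDev {X ι : Type*} [MeasurableSpace X] {n : ℕ} (D : Measure X)
    (g : ι → X → ℝ) (x : Fin n → X) : ℝ :=
  ⨆ i, (∫ a, g i a ∂D - (1 / (n : ℝ)) * ∑ j, g i (x j))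

lemma bddAbove_of_abs_le {ι : Type*} {u : ι → ℝ} {B : ℝ} (h : ∀ i, |u i| ≤ B) :
    BddAbove (Set.range u) :=
  ⟨B, by rintro _ ⟨i, rfl⟩; exact (le_abs_self _).trans (h i)⟩

lemma abs_iSup_le_of_abs_le {ι : Type*} [Nonempty ι] {u : ι → ℝ} {B : ℝ}
    (h : ∀ i, |u i| ≤ B) : |⨆ i, u i| ≤ B := by
  have i : ι := Classical.arbitrary ι
  exact abs_le.2 ⟨(neg_le_of_abs_le (h i)).trans (le_ciSup (bddAbove_of_abs_le h) i),
    ciSup_le fun i => (le_abs_self _).trans (h i)⟩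

lemma abs_avg_le {n : ℕ} {u : Fin n → ℝ} {B : ℝ} (hB : 0 ≤ B) (h : ∀ j, |u j| ≤ B) :
    |(1 / (n : ℝ)) * ∑ j, u j| ≤ B := by
  rcases Nat.eq_zero_or_pos n with rfl | hn
  · simpa using hB
  have hn0 : (0 : ℝ) < n := by exact_mod_cast hn
  rw [abs_mul, abs_of_pos (by positivity : 0 < 1 / (n : ℝ))]
  have : |∑ j, u j| ≤ n * B :=
    (Finset.abs_sum_le_sum_abs _ _).trans (by
      simpa using Finset.sum_le_sum fun j (_ : j ∈ Finset.univ) => h j)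
  calc 1 / (n : ℝ) * |∑ j, u j| ≤ 1 / (n : ℝ) * (n * B) := by gcongr
    _ = B := by field_simp

lemma MeasureTheory.MeasurePreserving.integral_comp_of_measurable {α β : Type*}
    [MeasurableSpace α] [MeasurableSpace β] {μ : Measure α} {ν : Measure β} {θ : α → β}
    (h : MeasurePreserving θ μ ν) {u : β → ℝ} (hu : Measurable u) :
    ∫ x, u (θ x) ∂μ = ∫ y, u y ∂ν := by
  rw [← h.map_eq, integral_map h.measurable.aemeasurable hu.aestronglyMeasurable]

section family

variable {X ι : Type*} {n : ℕ} {g : ι → X → ℝ}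

lemma abs_signedAvg_le (σ : Fin n → Bool) {u : X → ℝ} (hu : ∀ x, |u x| ≤ 1) (x : Fin n → X) :
    |signedAvg σ u x| ≤ 1 :=
  abs_avg_le zero_le_one fun j => by
    rw [abs_mul]
    split_ifs <;> simpa using hu _

lemma signedAvg_not (σ : Fin n → Bool) (u : X → ℝ) (x : Fin n → X) :
    signedAvg (fun j => !σ j) u x = -signedAvg σ u x := by
  unfold signedAvg
  rw [← mul_neg, ← Finset.sum_neg_distrib]
  congr 1
  refine Finset.sum_congr rfl fun j _ => ?_
  cases h : σ j <;> simp [h]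

/-- Flipping all signs is a bijection of the sign patterns, so sums over patterns are unchanged. -/
lemma sum_not_comp (F : (Fin n → Bool) → ℝ) :
    ∑ σ : Fin n → Bool, F (fun j => !σ j) = ∑ σ, F σ :=
  (Equiv.arrowCongr (Equiv.refl (Fin n)) Equiv.boolNot).sum_comp F

variable [MeasurableSpace X] (D : Measure X)

lemma measurable_signedAvg (σ : Fin n → Bool) {u : X → ℝ} (hu : Measurable u) :
    Measurable (signedAvg σ u) := by
  unfold signedAvg
  fun_prop

lemma radFamily_neg : radFamily n D (fun i x => -g i x) = radFamily n D g := by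
  unfold radFamily
  congr 1
  funext x
  congr 1
  rw [← sum_not_comp fun σ => ⨆ i, signedAvg σ (g i) x]
  refine Finset.sum_congr rfl fun σ _ => ?_
  congr 1
  funext i
  rw [signedAvg_not]
  simp [signedAvg]

lemma measurable_supDev [Countable ι] (hgm : ∀ i, Measurable (g i)) :
    Measurable (supDev (n := n) D g) := by
  refine Measurable.iSup fun i => ?_
  have := hgm i
  fun_prop

variable [IsProbabilityMeasure D]

lemma integrable_iSup_signedAvg [Countable ι] [Nonempty ι] (hgm : ∀ i, Measurable (g i))
    (hg1 : ∀ i x, |g i x| ≤ 1) (σ : Fin n → Bool) :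
    Integrable (fun x => ⨆ i, signedAvg σ (g i) x) (Measure.pi fun _ : Fin n => D) :=
  integrable_of_abs_le (Measurable.iSup fun i => measurable_signedAvg σ (hgm i))
    fun x => abs_iSup_le_of_abs_le fun i => abs_signedAvg_le σ (hg1 i) x

lemma radFamily_eq_sum [Countable ι] [Nonempty ι] (hgm : ∀ i, Measurable (g i))
    (hg1 : ∀ i x, |g i x| ≤ 1) :
    radFamily n D g = (∑ σ : Fin n → Bool,
      ∫ x, ⨆ i, signedAvg σ (g i) x ∂(Measure.pi fun _ : Fin n => D)) / 2 ^ n := by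
  unfold radFamily
  rw [integral_div, integral_finsetSum _ fun σ _ => integrable_iSup_signedAvg D hgm hg1 σ]

lemma abs_dev_le (hg1 : ∀ i x, |g i x| ≤ 1) (x : Fin n → X) (i : ι) :
    |∫ a, g i a ∂D - (1 / (n : ℝ)) * ∑ j, g i (x j)| ≤ 2 := by
  have h1 : |∫ a, g i a ∂D| ≤ 1 := abs_integral_le_of_abs_le (hg1 i)
  have h2 : |(1 / (n : ℝ)) * ∑ j, g i (x j)| ≤ 1 := abs_avg_le zero_le_one fun j => hg1 i _
  exact (abs_sub _ _).trans (by linarith)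

/-- The bounded-difference property of `supDev`: only one of the `n` summands changes. -/
lemma supDev_update_sub_le [Nonempty ι] (hg1 : ∀ i x, |g i x| ≤ 1)
    (hosc : ∀ i x y, g i x - g i y ≤ 1) (j : Fin n) (x : Fin n → X) (a : X) :
    supDev D g (Function.update x j a) - supDev D g x ≤ 1 / n := by
  rw [sub_le_iff_le_add]
  refine ciSup_le fun i => ?_
  have h1 := le_ciSup (bddAbove_of_abs_le (abs_dev_le D hg1 x)) i
  have h2 : ∑ k, g i (x k) - ∑ k, g i (Function.update x j a k) ≤ 1 := by
    rw [← Finset.sum_sub_distrib]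
    calc _ ≤ ∑ k, if k = j then (1 : ℝ) else 0 := by
          refine Finset.sum_le_sum fun k _ => ?_
          by_cases hk : k = j
          · simpa [hk] using hosc i (x j) a
          · simp [hk]
      _ = 1 := by simp
  have h3 : (1 / (n : ℝ)) * (∑ k, g i (x k) - ∑ k, g i (Function.update x j a k))
      ≤ (1 / (n : ℝ)) * 1 := by gcongr
  change _ ≤ supDev D g x at h1
  rw [mul_sub] at h3
  linarith

/-- Comparison with a ghost sample, the pairs `(xⱼ, x'ⱼ)` being drawn independently from `D × D`. -/
lemma integral_supDev_le_ghost [Countable ι] [Nonempty ι] (hn : 1 ≤ n)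
    (hgm : ∀ i, Measurable (g i)) (hg1 : ∀ i x, |g i x| ≤ 1) :
    ∫ x, supDev D g x ∂(Measure.pi fun _ : Fin n => D) ≤
      ∫ z, ⨆ i, (1 / (n : ℝ)) * ∑ j, (g i (z j).2 - g i (z j).1)
        ∂(Measure.pi fun _ : Fin n => D.prod D) := by
  have hn0 : (0 : ℝ) < n := by exact_mod_cast hn
  set P := Measure.pi fun _ : Fin n => D
  set U : (Fin n → X) × (Fin n → X) → ℝ :=
    fun p => ⨆ i, (1 / (n : ℝ)) * ∑ j, (g i (p.2 j) - g i (p.1 j)) with hU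
  have hterm : ∀ i (p : (Fin n → X) × (Fin n → X)),
      |(1 / (n : ℝ)) * ∑ j, (g i (p.2 j) - g i (p.1 j))| ≤ 2 := fun i p =>
    abs_avg_le zero_le_two fun j =>
      (abs_sub _ _).trans (by linarith [hg1 i (p.2 j), hg1 i (p.1 j)])
  have htm : ∀ i, Measurable fun p : (Fin n → X) × (Fin n → X) =>
      (1 / (n : ℝ)) * ∑ j, (g i (p.2 j) - g i (p.1 j)) := fun i => by
    have := hgm i
    fun_prop
  have hUm : Measurable U := Measurable.iSup htm
  have hUB : ∀ p, |U p| ≤ 2 := fun p => abs_iSup_le_of_abs_le fun i => hterm i p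
  have hUi : Integrable U (P.prod P) := integrable_of_abs_le hUm hUB
  have mp := measurePreserving_arrowProdEquivProdArrow X X (Fin n) (fun _ => D) (fun _ => D)
  have hright : ∫ z, ⨆ i, (1 / (n : ℝ)) * ∑ j, (g i (z j).2 - g i (z j).1)
        ∂(Measure.pi fun _ : Fin n => D.prod D) = ∫ x, ∫ x', U (x, x') ∂P ∂P := by
    rw [← integral_prod U hUi]
    exact mp.integral_comp_of_measurable hUm
  rw [hright]
  refine integral_mono (integrable_of_abs_le (measurable_supDev D hgm)
    fun x => abs_iSup_le_of_abs_le (abs_dev_le D hg1 x)) hUi.integral_prod_left fun x => ?_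
  refine ciSup_le fun i => ?_
  have hgi : ∀ j, Integrable (fun x' : Fin n → X => g i (x' j)) P := fun j =>
    integrable_of_abs_le ((hgm i).comp (measurable_pi_apply j)) fun x' => hg1 i _
  have hgi' : ∀ j, Integrable (fun x' : Fin n → X => g i (x' j) - g i (x j)) P := fun j =>
    (hgi j).sub (integrable_const _)
  have hmean : ∫ a, g i a ∂D - (1 / (n : ℝ)) * ∑ j, g i (x j)
      = ∫ x', (1 / (n : ℝ)) * ∑ j, (g i (x' j) - g i (x j)) ∂P := by
    rw [integral_const_mul, integral_finsetSum _ fun j _ => hgi' j]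
    have : ∀ j, ∫ x', (g i (x' j) - g i (x j)) ∂P = ∫ a, g i a ∂D - g i (x j) := fun j => by
      rw [integral_sub (hgi j) (integrable_const _),
        (measurePreserving_eval (fun _ : Fin n => D) j).integral_comp_of_measurable (hgm i)]
      simp
    simp only [this, Finset.sum_sub_distrib, Finset.sum_const, Finset.card_univ, Fintype.card_fin,
      nsmul_eq_mul]
    field_simp
  rw [hmean]
  refine integral_mono (integrable_of_abs_le ((htm i).comp measurable_prodMk_left)
    fun x' => hterm i (x, x')) (integrable_of_abs_le (hUm.comp measurable_prodMk_left)
    fun x' => hUB (x, x')) fun x' => ?_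
  exact le_ciSup (bddAbove_of_abs_le fun i => hterm i (x, x')) i

/-- Swapping `xⱼ` with `x'ⱼ` where `σⱼ = -1` preserves the law of the pairs, which inserts the signs;
the supremum then splits over the two samples. -/
lemma ghost_le_signed [Countable ι] [Nonempty ι]
    (hgm : ∀ i, Measurable (g i)) (hg1 : ∀ i x, |g i x| ≤ 1) (σ : Fin n → Bool) :
    ∫ z, ⨆ i, (1 / (n : ℝ)) * ∑ j, (g i (z j).2 - g i (z j).1)
        ∂(Measure.pi fun _ : Fin n => D.prod D) ≤
      ∫ x, ⨆ i, signedAvg σ (g i) x ∂(Measure.pi fun _ : Fin n => D) +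
      ∫ x, ⨆ i, signedAvg (fun j => !σ j) (g i) x ∂(Measure.pi fun _ : Fin n => D) := by
  set P := Measure.pi fun _ : Fin n => D
  set Q := Measure.pi fun _ : Fin n => D.prod D
  have htm : ∀ i, Measurable fun z : Fin n → X × X =>
      (1 / (n : ℝ)) * ∑ j, (g i (z j).2 - g i (z j).1) := fun i => by
    have := hgm i
    fun_prop
  set T : (Fin n → X × X) → ℝ :=
    fun z => ⨆ i, (1 / (n : ℝ)) * ∑ j, (g i (z j).2 - g i (z j).1) with hT
  have hTm : Measurable T := Measurable.iSup htm
  have hTB : ∀ z, |T z| ≤ 2 := fun z => abs_iSup_le_of_abs_le fun i =>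
    abs_avg_le zero_le_two fun j =>
      (abs_sub _ _).trans (by linarith [hg1 i (z j).2, hg1 i (z j).1])
  have hθj : ∀ j, MeasurePreserving (if σ j then id else Prod.swap : X × X → X × X)
      (D.prod D) (D.prod D) := fun j => by
    split_ifs
    · exact MeasurePreserving.id _
    · exact Measure.measurePreserving_swap
  have hθ := measurePreserving_pi (fun _ : Fin n => D.prod D) (fun _ : Fin n => D.prod D) hθj
  have h1 : MeasurePreserving (fun (z : Fin n → X × X) j => (z j).1) Q P :=
    measurePreserving_pi (fun _ : Fin n => D.prod D) (fun _ : Fin n => D)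
      fun _ => measurePreserving_fst
  have h2 : MeasurePreserving (fun (z : Fin n → X × X) j => (z j).2) Q P :=
    measurePreserving_pi (fun _ : Fin n => D.prod D) (fun _ : Fin n => D)
      fun _ => measurePreserving_snd
  have hA : ∀ τ : Fin n → Bool, Measurable fun x => ⨆ i, signedAvg τ (g i) x := fun τ =>
    Measurable.iSup fun i => measurable_signedAvg τ (hgm i)
  have hi := fun τ : Fin n → Bool => integrable_iSup_signedAvg D hgm hg1 τ
  have hi2 : Integrable (fun z : Fin n → X × X => ⨆ i, signedAvg σ (g i) fun j => (z j).2) Q :=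
    h2.integrable_comp_of_integrable (hi σ)
  have hi1 : Integrable (fun z : Fin n → X × X =>
      ⨆ i, signedAvg (fun j => !σ j) (g i) fun j => (z j).1) Q :=
    h1.integrable_comp_of_integrable (hi _)
  rw [← hθ.integral_comp_of_measurable hTm, ← h2.integral_comp_of_measurable (hA σ),
    ← h1.integral_comp_of_measurable (hA _), ← integral_add hi2 hi1]
  refine integral_mono (integrable_of_abs_le (hTm.comp hθ.measurable) fun z => hTB _)
    (hi2.add hi1) fun z => ?_
  refine ciSup_le fun i => ?_
  refine le_trans (le_of_eq ?_) (add_le_add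
    (le_ciSup (bddAbove_of_abs_le fun i => abs_signedAvg_le σ (hg1 i) fun j => (z j).2) i)
    (le_ciSup (bddAbove_of_abs_le fun i =>
      abs_signedAvg_le (fun j => !σ j) (hg1 i) fun j => (z j).1) i))
  unfold signedAvg
  rw [← mul_add, ← Finset.sum_add_distrib]
  congr 1
  refine Finset.sum_congr rfl fun j _ => ?_
  cases h : σ j <;> simp [h] <;> ring

/-- The symmetrization bound, by averaging the ghost-sample bound over all sign patterns. -/
lemma integral_supDev_le [Countable ι] [Nonempty ι] (hn : 1 ≤ n)
    (hgm : ∀ i, Measurable (g i)) (hg1 : ∀ i x, |g i x| ≤ 1) :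
    ∫ x, supDev D g x ∂(Measure.pi fun _ : Fin n => D) ≤ 2 * radFamily n D g := by
  have hsum := Finset.sum_le_sum fun σ (_ : σ ∈ (Finset.univ : Finset (Fin n → Bool))) =>
    (integral_supDev_le_ghost D hn hgm hg1).trans (ghost_le_signed D hgm hg1 σ)
  rw [Finset.sum_add_distrib, sum_not_comp fun σ : Fin n → Bool =>
    ∫ x, ⨆ i, signedAvg σ (g i) x ∂(Measure.pi fun _ : Fin n => D)] at hsum
  simp only [Finset.sum_const, Finset.card_univ, Fintype.card_fun, Fintype.card_bool,
    Fintype.card_fin, nsmul_eq_mul, Nat.cast_pow, Nat.cast_ofNat] at hsum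
  rw [radFamily_eq_sum D hgm hg1, mul_div_assoc', le_div_iff₀ (by positivity)]
  linarith

lemma measure_supDev_gt_le [Countable ι] [Nonempty ι] (hn : 1 ≤ n)
    (hgm : ∀ i, Measurable (g i)) (hg1 : ∀ i x, |g i x| ≤ 1)
    (hosc : ∀ i x y, g i x - g i y ≤ 1) {ε : ℝ} (hε : 0 ≤ ε) :
    (Measure.pi fun _ : Fin n => D) {x | 2 * radFamily n D g + ε < supDev D g x} ≤
      ENNReal.ofReal (Real.exp (-2 * n * ε ^ 2)) := by
  rw [← ENNReal.ofReal_toReal (measure_ne_top _ _)]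
  refine ENNReal.ofReal_le_ofReal (le_trans (measureReal_mono fun x hx => ?_)
    (mcdiarmid D hn (measurable_supDev D hgm)
      (fun x => abs_iSup_le_of_abs_le (abs_dev_le D hg1 x))
      (supDev_update_sub_le D hg1 hosc) hε))
  have := integral_supDev_le D hn hgm hg1
  simp only [Set.mem_ofPred_eq] at hx ⊢
  linarith

end family

/-! ### The disparity class -/

lemma Gam_mem_Icc {K : ℕ} {p q : Fin K → ℝ} (hp : inSimplex p) (hq : inSimplex q) :
    0 ≤ Gam p q ∧ Gam p q ≤ 1 := by
  have h0 : 0 ≤ ∑ k, p k * q k := Finset.sum_nonneg fun k _ => mul_nonneg (hp.1 k) (hq.1 k)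
  have h1 : ∑ k, p k * q k ≤ 1 := by
    rw [← hp.2]
    refine Finset.sum_le_sum fun k _ => mul_le_of_le_one_right (hp.1 k) ?_
    rw [← hq.2]
    exact Finset.single_le_sum (fun k _ => hq.1 k) (Finset.mem_univ k)
  unfold Gam
  constructor <;> linarith

lemma rademacher_GGam_eq {X : Type*} [MeasurableSpace X] {K : ℕ} (n : ℕ) (D : Measure X)
    (H : Set (X → Fin K → ℝ)) :
    rademacher n D (GGam H) =
      radFamily n D (fun (i : H × H) x => Gam (i.1.1 x) (i.2.1 x)) := by
  unfold rademacher radFamily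
  congr 1
  funext x
  congr 1
  refine Finset.sum_congr rfl fun σ _ => ?_
  rw [iSup]
  congr 1
  ext r
  constructor
  · rintro ⟨_, ⟨h₁, hh₁, h₂, hh₂, rfl⟩, rfl⟩
    exact ⟨(⟨h₁, hh₁⟩, ⟨h₂, hh₂⟩), rfl⟩
  · rintro ⟨⟨⟨h₁, hh₁⟩, ⟨h₂, hh₂⟩⟩, rfl⟩
    exact ⟨_, ⟨h₁, hh₁, h₂, hh₂, rfl⟩, rfl⟩

/-- with probability at least 1 − δ over x ∼ D^n, every pair h, h' ∈ H
satisfies |dis_D(h',h) − dis_{D̂ₓ}(h',h)| ≤ 2 R_{n,D}(G_Γ H) + √(log(2/δ)/(2n)), where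
dis_{D̂ₓ}(h',h) = (1/n) ∑ᵢ Γ(h'(xᵢ), h(xᵢ)) is the empirical expected disparity. -/
theorem dis_rademacher_bound {X : Type*} [MeasurableSpace X] (K : ℕ) (hK : 1 ≤ K)
    (D : Measure X) [IsProbabilityMeasure D]
    (H : Set (X → Fin K → ℝ)) (hHc : H.Countable) (hHne : H.Nonempty)
    (hHm : ∀ h' ∈ H, Measurable h') (hHs : ∀ h' ∈ H, ∀ x, inSimplex (h' x))
    (n : ℕ) (hn : 1 ≤ n) (δ : ℝ) (hδ : 0 < δ) :
    (Measure.pi fun _ : Fin n => D)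
      {x | ¬ ∀ h ∈ H, ∀ h' ∈ H,
        |dis D h' h - (1 / (n : ℝ)) * ∑ i, Gam (h' (x i)) (h (x i))| ≤
          2 * rademacher n D (GGam H) + Real.sqrt (Real.log (2 / δ) / (2 * n))} ≤
      ENNReal.ofReal δ := by
  classical
  rcases le_or_gt 1 δ with hδ1 | hδ1
  · exact prob_le_one.trans (by simpa using hδ1)
  have hn0 : (0 : ℝ) < n := by exact_mod_cast hn
  have : Countable H := hHc.to_subtype
  have : Nonempty H := hHne.to_subtype
  set P := Measure.pi fun _ : Fin n => D
  set g : H × H → X → ℝ := fun i x => Gam (i.1.1 x) (i.2.1 x) with hg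
  have hg01 : ∀ i x, 0 ≤ g i x ∧ g i x ≤ 1 := fun i x =>
    Gam_mem_Icc (hHs _ i.1.2 x) (hHs _ i.2.2 x)
  have hgm : ∀ i, Measurable (g i) := fun i => by
    have h1 := hHm _ i.1.2
    have h2 := hHm _ i.2.2
    simp only [hg, Gam]
    fun_prop
  have hg1 : ∀ i x, |g i x| ≤ 1 := fun i x => by
    rw [abs_of_nonneg (hg01 i x).1]
    exact (hg01 i x).2
  have hng1 : ∀ i x, |-g i x| ≤ 1 := fun i x => by
    rw [abs_neg]
    exact hg1 i x
  set ε := Real.sqrt (Real.log (2 / δ) / (2 * n)) with hε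
  have hlog : 0 ≤ Real.log (2 / δ) := Real.log_nonneg (by rw [le_div_iff₀ hδ]; linarith)
  -- this choice of `ε` makes each one-sided tail equal to `δ / 2`
  have htail : Real.exp (-2 * n * ε ^ 2) = δ / 2 := by
    rw [hε, Real.sq_sqrt (by positivity)]
    have : -2 * (n : ℝ) * (Real.log (2 / δ) / (2 * n)) = -Real.log (2 / δ) := by field_simp
    rw [this, Real.exp_neg, Real.exp_log (by positivity), inv_div]
  have hplus := measure_supDev_gt_le D hn hgm hg1
    (fun i x y => by linarith [(hg01 i x).2, (hg01 i y).1]) (Real.sqrt_nonneg _ : 0 ≤ ε)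
  have hminus := measure_supDev_gt_le D hn (g := fun i x => -g i x) (fun i => (hgm i).neg) hng1
    (fun i x y => by linarith [(hg01 i x).1, (hg01 i y).2]) (Real.sqrt_nonneg _ : 0 ≤ ε)
  rw [radFamily_neg, htail] at hminus
  rw [htail] at hplus
  rw [rademacher_GGam_eq]
  calc _ ≤ P ({x | 2 * radFamily n D g + ε < supDev D g x} ∪
        {x | 2 * radFamily n D g + ε < supDev D (fun i x => -g i x) x}) := by
        refine measure_mono fun x hx => ?_
        by_contra hcon
        simp only [Set.mem_union, Set.mem_ofPred_eq, not_or, not_lt] at hcon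
        refine hx fun h hh h' hh' => ?_
        have h1 := (le_ciSup (bddAbove_of_abs_le (abs_dev_le D hg1 x))
          (⟨h', hh'⟩, ⟨h, hh⟩)).trans hcon.1
        have h2 := (le_ciSup (bddAbove_of_abs_le (abs_dev_le D hng1 x))
          (⟨h', hh'⟩, ⟨h, hh⟩)).trans hcon.2
        rw [integral_neg, Finset.sum_neg_distrib, mul_neg] at h2
        simp only [hg] at h1 h2
        unfold dis
        rw [abs_le]
        constructor <;> linarith
    _ ≤ ENNReal.ofReal (δ / 2) + ENNReal.ofReal (δ / 2) :=
        (measure_union_le _ _).trans (add_le_add hplus hminus)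
    _ = ENNReal.ofReal δ := by
        rw [← ENNReal.ofReal_add (by positivity) (by positivity), add_halves]
end
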